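/- For all graphons W, W' and every finite simple graph H with a distinguished labelled vertex 1, the functions y ↦ t_y(H,W) satisfy ∫₀¹ |t_y(H,W) − t_y(H,W')| dy ≤ 2 |E(H)| · ‖W − W'‖_□. -/

import Mathlib

/-!
Integrating `t_y(H, W) − t_y(H, W')` over a measurable set `A` of root positions gives an integral
over `[0,1]^V` of `1_A(x_{v₀})` times a difference of two products over `E(H)`. Replacing `W'` by
`W` one edge at a time, the change caused by the edge `uw` is the integral of
`(W − W')(x_u, x_w)` against a `[0,1]`-valued weight none of whose factors involves both `x_u` and
`x_w`. With all other coordinates frozen, that weight has the form `f(x_u) g(x_w)`, and since the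
integral is linear in `f` and in `g`, it is extremal at indicator functions, so the change is at
most `‖W − W'‖_□`. The factor `2` comes from splitting `[0,1]` into the sets where the difference
is nonnegative and nonpositive.
-/

open MeasureTheory Set Filter
open scoped symmDiff

noncomputable section

/-- The unit interval `[0,1]` as a subset of `ℝ`. -/
def I01 : Set ℝ := Set.Icc 0 1

/-- A graphon: a symmetric measurable kernel with values in `[0,1]`. -/
structure Graphon where
  W : ℝ → ℝ → ℝ
  measurable : Measurable (Function.uncurry W)
  symm : ∀ x y, W x y = W y x
  nonneg : ∀ x y, 0 ≤ W x y
  le_one : ∀ x y, W x y ≤ 1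

/-- The cut norm `‖U‖_□` of a kernel `U`. -/
def cutNorm (U : ℝ → ℝ → ℝ) : ℝ :=
  sSup { r | ∃ A B : Set ℝ, MeasurableSet A ∧ MeasurableSet B ∧ A ⊆ I01 ∧ B ⊆ I01 ∧
    r = |∫ x in A, ∫ y in B, U x y| }

/-- Extend an assignment `x` of values to the non-root vertices by the value `y` at the
root vertex `v₀`. -/
def extFn {V : Type*} [DecidableEq V] (v₀ : V) (y : ℝ) (x : {v : V // v ≠ v₀} → ℝ) (v : V) : ℝ :=
  if h : v = v₀ then y else x ⟨v, h⟩

/-- The `1`-labelled homomorphism density `t_y(H, W)`: the labelled vertex `v₀` is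
pinned at `y`, and the coordinates of all other vertices are integrated over `[0,1]`. -/
def homDensity1 {V : Type*} [Fintype V] [DecidableEq V] (H : SimpleGraph V)
    [DecidableRel H.Adj] (v₀ : V) (G : Graphon) (y : ℝ) : ℝ :=
  ∫ x : {v : V // v ≠ v₀} → ℝ,
    (∏ e ∈ H.edgeFinset,
      Sym2.lift ⟨fun u w => G.W (extFn v₀ y x u) (extFn v₀ y x w),
        fun _ _ => G.symm _ _⟩ e)
    ∂(Measure.pi fun _ => volume.restrict I01)

lemma indicator_one_mem_unitInterval {α : Type*} (A : Set α) (a : α) :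
    A.indicator (1 : α → ℝ) a ∈ unitInterval :=
  ⟨indicator_nonneg (fun _ _ => zero_le_one) a, indicator_le_self' (fun _ _ => zero_le_one) a⟩

lemma norm_le_one_of_mem_unitInterval {r : ℝ} (hr : r ∈ unitInterval) : ‖r‖ ≤ 1 := by
  rw [Real.norm_of_nonneg hr.1]
  exact hr.2

/-! ### Bilinear forms with weights in the unit interval -/

section BilinearForm

variable {α β : Type*} [MeasurableSpace α] [MeasurableSpace β] {μ : Measure α} {ν : Measure β}

lemma integral_mul_le_setIntegral_nonneg {F f : α → ℝ} (hF : Integrable F μ)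
    (hf : AEStronglyMeasurable f μ) (hf01 : ∀ a, f a ∈ unitInterval) :
    ∫ a, F a * f a ∂μ ≤ ∫ a in {a | 0 ≤ F a}, F a ∂μ := by
  have hA : NullMeasurableSet {a | 0 ≤ F a} μ :=
    aestronglyMeasurable_const.nullMeasurableSet_le hF.1
  have hFf : Integrable (fun a => F a * f a) μ :=
    hF.mul_bdd hf (ae_of_all _ fun a => norm_le_one_of_mem_unitInterval (hf01 a))
  rw [← integral_indicator₀ hA]
  refine integral_mono hFf (hF.indicator₀ hA) fun a => ?_
  by_cases ha : 0 ≤ F a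
  · rw [indicator_of_mem (s := {a | 0 ≤ F a}) ha]
    exact mul_le_of_le_one_right ha (hf01 a).2
  · rw [indicator_of_notMem (s := {a | 0 ≤ F a}) ha]
    exact mul_nonpos_of_nonpos_of_nonneg (not_le.1 ha).le (hf01 a).1

variable [SFinite μ] [SFinite ν] {U : α → β → ℝ}

lemma abs_setIntegral_setIntegral_le_integral_abs (hU : Integrable (Function.uncurry U) (μ.prod ν))
    (A : Set α) (B : Set β) :
    |∫ a in A, ∫ b in B, U a b ∂ν ∂μ| ≤ ∫ p, |U p.1 p.2| ∂μ.prod ν :=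
  calc |∫ a in A, ∫ b in B, U a b ∂ν ∂μ|
      = |∫ p in A ×ˢ B, U p.1 p.2 ∂μ.prod ν| := by
        rw [setIntegral_prod (fun p : α × β => U p.1 p.2) hU.integrableOn]
    _ ≤ ∫ p in A ×ˢ B, |U p.1 p.2| ∂μ.prod ν := abs_integral_le_integral_abs
    _ ≤ ∫ p, |U p.1 p.2| ∂μ.prod ν :=
        setIntegral_le_integral hU.abs (ae_of_all _ fun _ => abs_nonneg _)

variable {f : α → ℝ} {g : β → ℝ}

lemma exists_integral_mul_mul_le_setIntegral (hUm : Measurable (Function.uncurry U))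
    (hU : Integrable (Function.uncurry U) (μ.prod ν)) (hf : Measurable f) (hg : Measurable g)
    (hf01 : ∀ a, f a ∈ unitInterval) (hg01 : ∀ b, g b ∈ unitInterval) :
    ∃ A B, MeasurableSet A ∧ MeasurableSet B ∧
      ∫ a, ∫ b, U a b * (f a * g b) ∂ν ∂μ ≤ ∫ a in A, ∫ b in B, U a b ∂ν ∂μ := by
  have hUgm : Measurable (Function.uncurry fun a b => U a b * g b) :=
    hUm.mul (hg.comp measurable_snd)
  have hUg : Integrable (Function.uncurry fun a b => U a b * g b) (μ.prod ν) :=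
    hU.mul_bdd (hg.comp measurable_snd).aestronglyMeasurable
      (ae_of_all _ fun p => norm_le_one_of_mem_unitInterval (hg01 p.2))
  let F : α → ℝ := fun a => ∫ b, U a b * g b ∂ν
  let A : Set α := {a | 0 ≤ F a}
  let K : β → ℝ := fun b => ∫ a in A, U a b ∂μ
  let B : Set β := {b | 0 ≤ K b}
  have hA : MeasurableSet A :=
    measurableSet_le measurable_const hUgm.stronglyMeasurable.integral_prod_right.measurable
  have hB : MeasurableSet B :=
    measurableSet_le measurable_const hUm.stronglyMeasurable.integral_prod_left.measurable
  have restrict_left {k : α × β → ℝ} (hk : Integrable k (μ.prod ν)) :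
      Integrable k ((μ.restrict A).prod ν) :=
    hk.mono_measure (Measure.prod_mono Measure.restrict_le_self le_rfl)
  refine ⟨A, B, hA, hB, ?_⟩
  calc ∫ a, ∫ b, U a b * (f a * g b) ∂ν ∂μ
      = ∫ a, F a * f a ∂μ := by
        simp only [F, ← integral_mul_const, mul_assoc, mul_comm (g _)]
    _ ≤ ∫ a in A, F a ∂μ :=
        integral_mul_le_setIntegral_nonneg hUg.integral_prod_left hf.aestronglyMeasurable hf01
    _ = ∫ b, K b * g b ∂ν := by
        simp only [F, K, ← integral_mul_const]
        exact integral_integral_swap (restrict_left hUg)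
    _ ≤ ∫ b in B, K b ∂ν :=
        integral_mul_le_setIntegral_nonneg (restrict_left hU).integral_prod_right
          hg.aestronglyMeasurable hg01
    _ = ∫ a in A, ∫ b in B, U a b ∂ν ∂μ := by
        refine (integral_integral_swap ?_).symm
        rw [Measure.prod_restrict]
        exact hU.integrableOn

lemma exists_abs_integral_mul_mul_le_abs_setIntegral (hUm : Measurable (Function.uncurry U))
    (hU : Integrable (Function.uncurry U) (μ.prod ν)) (hf : Measurable f) (hg : Measurable g)
    (hf01 : ∀ a, f a ∈ unitInterval) (hg01 : ∀ b, g b ∈ unitInterval) :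
    ∃ A B, MeasurableSet A ∧ MeasurableSet B ∧
      |∫ a, ∫ b, U a b * (f a * g b) ∂ν ∂μ| ≤ |∫ a in A, ∫ b in B, U a b ∂ν ∂μ| := by
  rcases abs_choice (∫ a, ∫ b, U a b * (f a * g b) ∂ν ∂μ) with h | h
  · obtain ⟨A, B, hA, hB, hAB⟩ := exists_integral_mul_mul_le_setIntegral hUm hU hf hg hf01 hg01
    exact ⟨A, B, hA, hB, h.trans_le (hAB.trans (le_abs_self _))⟩
  · obtain ⟨A, B, hA, hB, hAB⟩ :=
      exists_integral_mul_mul_le_setIntegral (U := -U) hUm.neg hU.neg hf hg hf01 hg01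
    simp only [Pi.neg_apply, neg_mul, integral_neg] at hAB
    exact ⟨A, B, hA, hB, h.trans_le (hAB.trans (neg_le_abs _))⟩

end BilinearForm

/-! ### The cut norm -/

/-- The uniform probability measure on `[0,1]`, as a measure on `ℝ`. -/
abbrev volumeI01 : Measure ℝ := volume.restrict I01

instance isProbabilityMeasure_volumeI01 : IsProbabilityMeasure volumeI01 := ⟨by simp [I01]⟩

lemma abs_setIntegral_setIntegral_le_cutNorm {U : ℝ → ℝ → ℝ}
    (hU : Integrable (Function.uncurry U) (volumeI01.prod volumeI01)) {A B : Set ℝ}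
    (hA : MeasurableSet A) (hB : MeasurableSet B) :
    |∫ a in A, ∫ b in B, U a b ∂volumeI01 ∂volumeI01| ≤ cutNorm U := by
  have hI : MeasurableSet I01 := measurableSet_Icc
  refine le_csSup ⟨∫ p, |U p.1 p.2| ∂volumeI01.prod volumeI01, ?_⟩
    ⟨A ∩ I01, B ∩ I01, hA.inter hI, hB.inter hI, inter_subset_right, inter_subset_right, ?_⟩
  · rintro _ ⟨A, B, hA, hB, hAI, hBI, rfl⟩
    simpa only [volumeI01, Measure.restrict_restrict hA, Measure.restrict_restrict hB,
      inter_eq_left.2 hAI, inter_eq_left.2 hBI] using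
      abs_setIntegral_setIntegral_le_integral_abs hU A B
  · simp only [volumeI01, Measure.restrict_restrict hA, Measure.restrict_restrict hB]

lemma abs_integral_mul_mul_le_cutNorm {U : ℝ → ℝ → ℝ} (hUm : Measurable (Function.uncurry U))
    (hU : Integrable (Function.uncurry U) (volumeI01.prod volumeI01)) {f g : ℝ → ℝ}
    (hf : Measurable f) (hg : Measurable g) (hf01 : ∀ a, f a ∈ unitInterval)
    (hg01 : ∀ b, g b ∈ unitInterval) :
    |∫ a, ∫ b, U a b * (f a * g b) ∂volumeI01 ∂volumeI01| ≤ cutNorm U := by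
  obtain ⟨A, B, hA, hB, hAB⟩ :=
    exists_abs_integral_mul_mul_le_abs_setIntegral hUm hU hf hg hf01 hg01
  exact hAB.trans (abs_setIntegral_setIntegral_le_cutNorm hU hA hB)

/-! ### Resampling coordinates of a product measure -/

lemma integral_comp_of_measurePreserving {α β E : Type*} [MeasurableSpace α] [MeasurableSpace β]
    [NormedAddCommGroup E] [NormedSpace ℝ E] {μ : Measure α} {ν : Measure β} {T : α → β}
    (hT : MeasurePreserving T μ ν) {k : β → E}
    (hk : AEStronglyMeasurable k ν) : ∫ a, k (T a) ∂μ = ∫ b, k b ∂ν := by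
  rw [← hT.map_eq] at hk ⊢
  exact (integral_map hT.aemeasurable hk).symm

section Resampling

variable {ι : Type*} [Fintype ι] [DecidableEq ι] {X : ι → Type*} [∀ i, MeasurableSpace (X i)]
  {μ : ∀ i, Measure (X i)} [∀ i, SigmaFinite (μ i)]

lemma measurePreserving_update (i : ι) [IsProbabilityMeasure (μ i)] :
    MeasurePreserving (fun p : (∀ j, X j) × X i => Function.update p.1 i p.2)
      ((Measure.pi μ).prod (μ i)) (Measure.pi μ) := by
  have hm : Measurable fun p : (∀ j, X j) × X i => Function.update p.1 i p.2 :=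
    measurable_update'
  refine ⟨hm, (Measure.pi_eq fun s hs => ?_).symm⟩
  have preimage_eq : (fun p : (∀ j, X j) × X i => Function.update p.1 i p.2) ⁻¹' univ.pi s =
      univ.pi (Function.update s i univ) ×ˢ s i := by
    ext ⟨z, a⟩
    simp only [mem_preimage, mem_prod, mem_univ_pi]
    rw [Function.forall_update_iff z fun j b => b ∈ s j,
      Function.forall_update_iff s fun j t => z j ∈ t]
    simp only [mem_univ, true_and, and_comm]
  rw [Measure.map_apply hm (MeasurableSet.univ_pi hs), preimage_eq, Measure.prod_prod,
    Measure.pi_pi, ← Finset.prod_erase_mul _ _ (Finset.mem_univ i),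
    ← Finset.prod_erase_mul _ _ (Finset.mem_univ i), Function.update_self, measure_univ, mul_one]
  congr 1
  refine Finset.prod_congr rfl fun j hj => ?_
  rw [Function.update_of_ne (Finset.ne_of_mem_erase hj)]

variable {E : Type*} [NormedAddCommGroup E] [NormedSpace ℝ E] {k : (∀ j, X j) → E}

lemma integrable_integral_update (hk : Integrable k (Measure.pi μ)) (i : ι)
    [IsProbabilityMeasure (μ i)] :
    Integrable (fun z => ∫ a, k (Function.update z i a) ∂μ i) (Measure.pi μ) :=
  ((measurePreserving_update i).integrable_comp_of_integrable hk).integral_prod_left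

lemma integral_integral_update (hk : Integrable k (Measure.pi μ)) (i : ι)
    [IsProbabilityMeasure (μ i)] :
    ∫ z, ∫ a, k (Function.update z i a) ∂μ i ∂Measure.pi μ = ∫ x, k x ∂Measure.pi μ := by
  have hmp := measurePreserving_update (μ := μ) i
  calc ∫ z, ∫ a, k (Function.update z i a) ∂μ i ∂Measure.pi μ
      = ∫ p, k (Function.update p.1 i p.2) ∂(Measure.pi μ).prod (μ i) :=
        (integral_prod _ (hmp.integrable_comp_of_integrable hk)).symm
    _ = ∫ x, k x ∂Measure.pi μ := integral_comp_of_measurePreserving hmp hk.1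

lemma integral_mul_mul_eq_integral_update {i j : ι} (hij : i ≠ j) [IsProbabilityMeasure (μ i)]
    [IsProbabilityMeasure (μ j)] {U : X i → X j → ℝ} {P Q : (∀ l, X l) → ℝ}
    (hk : Integrable (fun x => U (x i) (x j) * (P x * Q x)) (Measure.pi μ))
    (hP : ∀ x b, P (Function.update x j b) = P x) (hQ : ∀ x a, Q (Function.update x i a) = Q x) :
    ∫ x, U (x i) (x j) * (P x * Q x) ∂Measure.pi μ =
      ∫ z, ∫ a, ∫ b, U a b * (P (Function.update z i a) * Q (Function.update z j b)) ∂μ j ∂μ i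
        ∂Measure.pi μ := by
  rw [← integral_integral_update hk j,
    ← integral_integral_update (integrable_integral_update hk j) i]
  have hQ' (z : ∀ l, X l) (a : X i) (b : X j) :
      Q (Function.update (Function.update z i a) j b) = Q (Function.update z j b) := by
    rw [Function.update_comm hij, hQ]
  simp only [Function.update_self, Function.update_of_ne hij, hP, hQ']

end Resampling

section Cube

variable {V : Type*} [Fintype V]

/-- The uniform probability measure on the cube `[0,1]^V`, as a measure on `V → ℝ`. -/
abbrev volumeCube (V : Type*) [Fintype V] : Measure (V → ℝ) := Measure.pi fun _ => volumeI01

lemma abs_integral_cube_mul_mul_le_cutNorm [DecidableEq V] {U : ℝ → ℝ → ℝ}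
    (hUm : Measurable (Function.uncurry U)) {C : ℝ} (hU : ∀ a b, ‖U a b‖ ≤ C) {u w : V}
    (huw : u ≠ w) {P Q : (V → ℝ) → ℝ} (hPm : Measurable P) (hQm : Measurable Q)
    (hP01 : ∀ x, P x ∈ unitInterval) (hQ01 : ∀ x, Q x ∈ unitInterval)
    (hP : ∀ x b, P (Function.update x w b) = P x) (hQ : ∀ x a, Q (Function.update x u a) = Q x) :
    |∫ x, U (x u) (x w) * (P x * Q x) ∂volumeCube V| ≤ cutNorm U := by
  have hUi : Integrable (Function.uncurry U) (volumeI01.prod volumeI01) :=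
    .of_bound hUm.aestronglyMeasurable C (ae_of_all _ fun p => hU p.1 p.2)
  have hpair : Measurable fun x : V → ℝ => (x u, x w) := by fun_prop
  have hUx : Measurable fun x : V → ℝ => U (x u) (x w) := hUm.comp hpair
  have hk : Integrable (fun x => U (x u) (x w) * (P x * Q x)) (volumeCube V) :=
    (Integrable.of_bound hUx.aestronglyMeasurable C (ae_of_all _ fun x => hU _ _)).mul_bdd
      (hPm.mul hQm).aestronglyMeasurable (ae_of_all _ fun x =>
        norm_le_one_of_mem_unitInterval (unitInterval.mul_mem (hP01 x) (hQ01 x)))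
  rw [integral_mul_mul_eq_integral_update huw hk hP hQ]
  have slice_le (z : V → ℝ) : ‖∫ a, ∫ b, U a b *
      (P (Function.update z u a) * Q (Function.update z w b)) ∂volumeI01 ∂volumeI01‖ ≤ cutNorm U :=
    abs_integral_mul_mul_le_cutNorm hUm hUi (hPm.comp (measurable_update z))
      (hQm.comp (measurable_update z)) (fun _ => hP01 _) fun _ => hQ01 _
  simpa using norm_integral_le_of_norm_le_const (μ := volumeCube V) (ae_of_all _ slice_le)

lemma measurePreserving_extFn [DecidableEq V] (v₀ : V) :
    MeasurePreserving (fun p : ℝ × ({v : V // v ≠ v₀} → ℝ) => extFn v₀ p.1 p.2)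
      (volumeI01.prod (volumeCube {v : V // v ≠ v₀})) (volumeCube V) := by
  have split_root := (measurePreserving_piEquivPiSubtypeProd
    (fun _ : V => volumeI01) (· = v₀)).symm
  let : Fintype {v : V // v = v₀} := Subtype.fintype (· = v₀)
  have root_coord := (measurePreserving_piUnique fun _ : {v : V // v = v₀} => volumeI01).symm
  exact split_root.comp (root_coord.prod (MeasurePreserving.id _))

end Cube

/-! ### Edge weights -/

namespace Graphon

variable {V : Type*}

/-- The weight `W(x_u, x_w)` of the edge `e = uw` under the vertex assignment `x`. -/
def edgeWeight (G : Graphon) (x : V → ℝ) (e : Sym2 V) : ℝ :=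
  Sym2.lift ⟨fun u w => G.W (x u) (x w), fun _ _ => G.symm _ _⟩ e

lemma edgeWeight_mem_unitInterval (G : Graphon) (x : V → ℝ) (e : Sym2 V) :
    G.edgeWeight x e ∈ unitInterval := by
  induction e with
  | _ u w => exact ⟨G.nonneg _ _, G.le_one _ _⟩

lemma measurable_edgeWeight (G : Graphon) (e : Sym2 V) :
    Measurable fun x => G.edgeWeight x e := by
  induction e with
  | _ u w =>
    have hpair : Measurable fun x : V → ℝ => (x u, x w) := by fun_prop
    exact G.measurable.comp hpair

lemma edgeWeight_update_of_notMem [DecidableEq V] (G : Graphon) {e : Sym2 V} {v : V} (hv : v ∉ e)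
    (x : V → ℝ) (a : ℝ) : G.edgeWeight (Function.update x v a) e = G.edgeWeight x e := by
  induction e with
  | _ u w =>
    rw [Sym2.mem_iff, not_or] at hv
    simp only [edgeWeight, Sym2.lift_mk, Function.update_of_ne (Ne.symm hv.1),
      Function.update_of_ne (Ne.symm hv.2)]

lemma norm_W_sub_W_le_one (G G' : Graphon) (a b : ℝ) : ‖G.W a b - G'.W a b‖ ≤ 1 :=
  abs_sub_le_of_nonneg_of_le (G.nonneg a b) (G.le_one a b) (G'.nonneg a b) (G'.le_one a b)

lemma measurable_prod_edgeWeight (K : Sym2 V → Graphon) (E : Finset (Sym2 V)) :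
    Measurable fun x => ∏ e ∈ E, (K e).edgeWeight x e :=
  Finset.measurable_prod _ fun e _ => (K e).measurable_edgeWeight e

lemma prod_edgeWeight_mem_unitInterval (K : Sym2 V → Graphon) (E : Finset (Sym2 V)) (x : V → ℝ) :
    ∏ e ∈ E, (K e).edgeWeight x e ∈ unitInterval :=
  unitInterval.prod_mem fun e _ => (K e).edgeWeight_mem_unitInterval x e

lemma prod_edgeWeight_update_of_forall_notMem [DecidableEq V] (K : Sym2 V → Graphon)
    {E : Finset (Sym2 V)} {v : V} (hv : ∀ e ∈ E, v ∉ e) (x : V → ℝ) (a : ℝ) :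
    ∏ e ∈ E, (K e).edgeWeight (Function.update x v a) e = ∏ e ∈ E, (K e).edgeWeight x e :=
  Finset.prod_congr rfl fun e he => (K e).edgeWeight_update_of_notMem (hv e he) x a

end Graphon

/-! ### Edge-decorated densities -/

open Graphon

lemma exists_eq_mk_ne_right {V : Type*} {e : Sym2 V} (he : ¬ e.IsDiag) (v : V) :
    ∃ u w, e = s(u, w) ∧ u ≠ w ∧ v ≠ w := by
  induction e with
  | _ u w =>
    rcases eq_or_ne v w with rfl | hvw
    · exact ⟨v, u, Sym2.eq_swap, Ne.symm he, Ne.symm he⟩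
    · exact ⟨u, w, rfl, he, hvw⟩

section DecoratedDensity

variable {V : Type*} [Fintype V]

/-- The density of an edge-decorated rooted graph: every edge `e ∈ E` carries its own graphon
`K e`, and the position of the root `v₀` is weighted by `φ`. Letting the graphon vary with the edge
is what allows it to be replaced one edge at a time. -/
def decoratedDensity (E : Finset (Sym2 V)) (v₀ : V) (φ : ℝ → ℝ) (K : Sym2 V → Graphon) : ℝ :=
  ∫ x, φ (x v₀) * ∏ e ∈ E, (K e).edgeWeight x e ∂volumeCube V

variable {φ : ℝ → ℝ}

lemma integrable_mul_prod_edgeWeight (hφ : Measurable φ) (hφ01 : ∀ a, φ a ∈ unitInterval)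
    (v₀ : V) (E : Finset (Sym2 V)) (K : Sym2 V → Graphon) :
    Integrable (fun x => φ (x v₀) * ∏ e ∈ E, (K e).edgeWeight x e) (volumeCube V) :=
  .of_bound ((hφ.comp (measurable_pi_apply v₀)).mul
      (measurable_prod_edgeWeight K E)).aestronglyMeasurable 1
    (ae_of_all _ fun x => norm_le_one_of_mem_unitInterval
      (unitInterval.mul_mem (hφ01 _) (prod_edgeWeight_mem_unitInterval K E x)))

lemma abs_integral_sub_mul_prod_edgeWeight_le_cutNorm (hφ : Measurable φ)
    (hφ01 : ∀ a, φ a ∈ unitInterval) {v₀ u w : V} (huw : u ≠ w) (hv₀ : v₀ ≠ w)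
    {E : Finset (Sym2 V)} (hE : s(u, w) ∉ E) (K : Sym2 V → Graphon) (G G' : Graphon) :
    |∫ x, (G.W (x u) (x w) - G'.W (x u) (x w)) *
        (φ (x v₀) * ∏ e ∈ E, (K e).edgeWeight x e) ∂volumeCube V|
      ≤ cutNorm fun a b => G.W a b - G'.W a b := by
  classical
  let P : (V → ℝ) → ℝ := fun x => φ (x v₀) * ∏ e ∈ E with w ∉ e, (K e).edgeWeight x e
  let Q : (V → ℝ) → ℝ := fun x => ∏ e ∈ E with w ∈ e, (K e).edgeWeight x e
  have weight_eq (x : V → ℝ) : φ (x v₀) * ∏ e ∈ E, (K e).edgeWeight x e = P x * Q x := by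
    rw [← Finset.prod_filter_not_mul_prod_filter E (w ∈ ·), ← mul_assoc]
  have hP (x : V → ℝ) (b : ℝ) : P (Function.update x w b) = P x := by
    simp only [P, Function.update_of_ne hv₀]
    rw [prod_edgeWeight_update_of_forall_notMem K fun e he => (Finset.mem_filter.1 he).2]
  have hQ (x : V → ℝ) (a : ℝ) : Q (Function.update x u a) = Q x := by
    refine prod_edgeWeight_update_of_forall_notMem K (fun e he hu => hE ?_) x a
    obtain ⟨heE, hw⟩ := Finset.mem_filter.1 he
    rwa [← (Sym2.mem_and_mem_iff huw).1 ⟨hu, hw⟩]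
  simp only [weight_eq]
  exact abs_integral_cube_mul_mul_le_cutNorm (U := fun a b => G.W a b - G'.W a b)
    (G.measurable.sub G'.measurable) (G.norm_W_sub_W_le_one G') huw
    ((hφ.comp (measurable_pi_apply v₀)).mul (measurable_prod_edgeWeight K _))
    (measurable_prod_edgeWeight K _)
    (fun x => unitInterval.mul_mem (hφ01 _) (prod_edgeWeight_mem_unitInterval K _ x))
    (prod_edgeWeight_mem_unitInterval K _) hP hQ

lemma abs_decoratedDensity_update_sub_le_cutNorm [DecidableEq V] (hφ : Measurable φ)
    (hφ01 : ∀ a, φ a ∈ unitInterval) (v₀ : V)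
    {E : Finset (Sym2 V)} {e : Sym2 V} (he : e ∈ E) (hdiag : ¬ e.IsDiag) (K : Sym2 V → Graphon)
    (G G' : Graphon) :
    |decoratedDensity E v₀ φ (Function.update K e G) -
        decoratedDensity E v₀ φ (Function.update K e G')|
      ≤ cutNorm fun a b => G.W a b - G'.W a b := by
  have prod_eq (G : Graphon) (x : V → ℝ) :
      ∏ e' ∈ E, (Function.update K e G e').edgeWeight x e' =
        G.edgeWeight x e * ∏ e' ∈ E.erase e, (K e').edgeWeight x e' := by
    rw [← Finset.mul_prod_erase E _ he, Function.update_self]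
    congr 1
    refine Finset.prod_congr rfl fun e' he' => ?_
    rw [Function.update_of_ne (Finset.ne_of_mem_erase he')]
  obtain ⟨u, w, rfl, huw, hv₀⟩ := exists_eq_mk_ne_right hdiag v₀
  rw [decoratedDensity, decoratedDensity,
    ← integral_sub (integrable_mul_prod_edgeWeight hφ hφ01 v₀ E _)
      (integrable_mul_prod_edgeWeight hφ hφ01 v₀ E _)]
  convert abs_integral_sub_mul_prod_edgeWeight_le_cutNorm hφ hφ01 huw hv₀
    (Finset.notMem_erase s(u, w) E) K G G' using 4 with x
  rw [prod_eq, prod_eq]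
  simp only [edgeWeight, Sym2.lift_mk]
  ring

lemma abs_decoratedDensity_sub_le_sum_cutNorm (hφ : Measurable φ)
    (hφ01 : ∀ a, φ a ∈ unitInterval) (v₀ : V) {E : Finset (Sym2 V)}
    (hE : ∀ e ∈ E, ¬ e.IsDiag) (K K' : Sym2 V → Graphon) :
    |decoratedDensity E v₀ φ K - decoratedDensity E v₀ φ K'|
      ≤ ∑ e ∈ E, cutNorm fun a b => (K e).W a b - (K' e).W a b := by
  classical
  have replace_edges (S : Finset (Sym2 V)) (hS : S ⊆ E) :
      |decoratedDensity E v₀ φ (S.piecewise K K') - decoratedDensity E v₀ φ K'|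
        ≤ ∑ e ∈ S, cutNorm fun a b => (K e).W a b - (K' e).W a b := by
    induction S using Finset.induction_on with
    | empty => simp
    | insert e S heS ih =>
      obtain ⟨he, hS⟩ := Finset.insert_subset_iff.1 hS
      have replace_edge := abs_decoratedDensity_update_sub_le_cutNorm hφ hφ01 v₀ he (hE e he)
        (S.piecewise K K') (K e) (K' e)
      rw [← Finset.piecewise_insert, Function.update_eq_self_iff.2
        (Finset.piecewise_eq_of_notMem S K K' heS).symm] at replace_edge
      rw [Finset.sum_insert heS]
      exact (abs_sub_le _ _ _).trans (add_le_add replace_edge (ih hS))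
  have piecewise_eq : decoratedDensity E v₀ φ (E.piecewise K K') = decoratedDensity E v₀ φ K := by
    refine integral_congr_ae (ae_of_all _ fun x => congrArg (φ (x v₀) * ·) ?_)
    refine Finset.prod_congr rfl fun e he => ?_
    rw [Finset.piecewise_eq_of_mem E K K' he]
  exact piecewise_eq ▸ replace_edges E subset_rfl

end DecoratedDensity

/-! ### Rooted homomorphism densities -/

section HomDensity

variable {V : Type*} [Fintype V] [DecidableEq V] (H : SimpleGraph V) [DecidableRel H.Adj]
  (v₀ : V) (G : Graphon)

lemma measurable_homDensity1 : Measurable (homDensity1 H v₀ G) :=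
  ((measurable_prod_edgeWeight (fun _ => G) H.edgeFinset).comp
    (measurePreserving_extFn v₀).measurable).stronglyMeasurable.integral_prod_right'.measurable

lemma integrable_homDensity1 : Integrable (homDensity1 H v₀ G) volumeI01 := by
  have hprod : Integrable (fun x => ∏ e ∈ H.edgeFinset, G.edgeWeight x e) (volumeCube V) := by
    simpa using integrable_mul_prod_edgeWeight (φ := fun _ => 1) measurable_const (by simp) v₀
      H.edgeFinset fun _ => G
  exact ((measurePreserving_extFn v₀).integrable_comp_of_integrable hprod).integral_prod_left

lemma integral_mul_homDensity1 {φ : ℝ → ℝ} (hφ : Measurable φ) (hφ01 : ∀ a, φ a ∈ unitInterval) :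
    ∫ y, φ y * homDensity1 H v₀ G y ∂volumeI01 =
      decoratedDensity H.edgeFinset v₀ φ fun _ => G := by
  have hmp := measurePreserving_extFn v₀
  have hk := integrable_mul_prod_edgeWeight hφ hφ01 v₀ H.edgeFinset fun _ => G
  calc ∫ y, φ y * homDensity1 H v₀ G y ∂volumeI01
      = ∫ y, ∫ x, φ (extFn v₀ y x v₀) * ∏ e ∈ H.edgeFinset, G.edgeWeight (extFn v₀ y x) e
          ∂volumeCube {v : V // v ≠ v₀} ∂volumeI01 := by
        simp only [extFn, dite_true, integral_const_mul]
        rfl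
    _ = ∫ p, φ (extFn v₀ p.1 p.2 v₀) * ∏ e ∈ H.edgeFinset, G.edgeWeight (extFn v₀ p.1 p.2) e
          ∂volumeI01.prod (volumeCube {v : V // v ≠ v₀}) :=
        (integral_prod _ (hmp.integrable_comp_of_integrable hk)).symm
    _ = decoratedDensity H.edgeFinset v₀ φ fun _ => G := integral_comp_of_measurePreserving hmp hk.1

lemma setIntegral_homDensity1 {A : Set ℝ} (hA : MeasurableSet A) :
    ∫ y in A, homDensity1 H v₀ G y ∂volumeI01 =
      decoratedDensity H.edgeFinset v₀ (A.indicator 1) fun _ => G := by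
  classical
  rw [← integral_mul_homDensity1 H v₀ G (measurable_one.indicator hA)
    (indicator_one_mem_unitInterval A), ← integral_indicator hA]
  simp only [indicator_apply, Pi.one_apply, ite_mul, one_mul, zero_mul]

lemma abs_setIntegral_homDensity1_sub_le (G' : Graphon) {A : Set ℝ} (hA : MeasurableSet A) :
    |∫ y in A, (homDensity1 H v₀ G y - homDensity1 H v₀ G' y) ∂volumeI01|
      ≤ H.edgeFinset.card * cutNorm fun a b => G.W a b - G'.W a b := by
  rw [integral_sub (integrable_homDensity1 H v₀ G).integrableOn
    (integrable_homDensity1 H v₀ G').integrableOn, setIntegral_homDensity1 H v₀ G hA,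
    setIntegral_homDensity1 H v₀ G' hA, ← nsmul_eq_mul, ← Finset.sum_const]
  exact abs_decoratedDensity_sub_le_sum_cutNorm (measurable_one.indicator hA)
    (indicator_one_mem_unitInterval A) v₀ (fun e he => H.not_isDiag_of_mem_edgeFinset he) _ _

end HomDensity

/-- **`L¹`-continuity of `1`-labelled homomorphism densities in the cut norm:**
`∫₀¹ |t_y(H,W) − t_y(H,W')| dy ≤ 2 |E(H)| ‖W − W'‖_□`. -/
theorem homDensity1_L1_bound
    {V : Type*} [Fintype V] [DecidableEq V] (H : SimpleGraph V)
    [DecidableRel H.Adj] (v₀ : V) (G G' : Graphon) :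
    (∫ y in I01, |homDensity1 H v₀ G y - homDensity1 H v₀ G' y|)
      ≤ 2 * H.edgeFinset.card * cutNorm fun x y => G.W x y - G'.W x y := by
  let D : ℝ → ℝ := fun y => homDensity1 H v₀ G y - homDensity1 H v₀ G' y
  have hDm : Measurable D := (measurable_homDensity1 H v₀ G).sub (measurable_homDensity1 H v₀ G')
  have hDi : Integrable D volumeI01 :=
    (integrable_homDensity1 H v₀ G).sub (integrable_homDensity1 H v₀ G')
  have hpos := abs_setIntegral_homDensity1_sub_le H v₀ G G' (A := {y | 0 ≤ D y})
    (measurableSet_le measurable_const hDm)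
  have hneg := abs_setIntegral_homDensity1_sub_le H v₀ G G' (A := {y | D y ≤ 0})
    (measurableSet_le hDm measurable_const)
  calc ∫ y in I01, |D y|
      = ∫ y in {y | 0 ≤ D y}, D y ∂volumeI01 - ∫ y in {y | D y ≤ 0}, D y ∂volumeI01 :=
        integral_norm_eq_pos_sub_neg hDi
    _ ≤ 2 * H.edgeFinset.card * cutNorm fun x y => G.W x y - G'.W x y := by
        linarith [le_of_abs_le hpos, neg_le_of_abs_le hneg]

end
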